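/- For all v, w ∈ ℌ⁰ one has ζ(v)·ζ(w) = ζ(v ⧢ w), where ⧢ is the shuffle product. -/

import Mathlib

/-!
The proof uses polylogarithms as formal power series and needs no integrals. Each letter acts on
`ℝ⟦X⟧` by an integration operator (`dt/t` for `x`, `dt/(1-t)` for `y`), and a word `w` acting on
`1` gives a series `Li_w` with nonnegative coefficients.

* For words ending in `y`, `Li_v · Li_w = Li_{v ⧢ w}` holds in `ℝ⟦X⟧` (`polylog_sh`): the recursion
  for `⧢` is the integration by parts formula `intL_mul_intL`, which is checked by applying the
  Euler derivation `X · d/dX`.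
* The coefficients of `Li_w` are `O(n^{-1/2})`, because averaging preserves this order; hence the
  coefficients of `Li_{xu}` are `O(n^{-3/2})` and summable (`summable_polylog_x`).
* For every index list the coefficients of `Li_w`, `w = z_{k₁}⋯z_{k_r}`, sum to `ζ(k₁,…,k_r)`
  (`tsum_coeff_polylog`): the `n`-th coefficient collects the terms with `m₁ = n`. The comparison
  is made in `[0, ∞]`, so it needs no convergence.

Since `ℌ⁰` is closed under `⧢`, evaluating at `X = 1`, that is, summing coefficients, turns the
Cauchy product of the absolutely convergent series `Li_v`, `Li_w` into `ζ(v) ζ(w) = ζ(v ⧢ w)`.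
-/


/- STATEMENT 3: For all v, w ∈ ℌ⁰ one has ζ(v)·ζ(w) = ζ(v ⧢ w), where ⧢ is the
shuffle product on ℌ = ℚ⟨x,y⟩. -/

noncomputable section

/-- The two letters x, y of ℌ = ℚ⟨x,y⟩. -/
inductive XY : Type
  | x : XY
  | y : XY

/-- A word in the letters x, y as an element of ℌ = ℚ⟨x,y⟩. -/
def ofW (w : List XY) : MonoidAlgebra ℚ (FreeMonoid XY) :=
  MonoidAlgebra.of ℚ (FreeMonoid XY) (FreeMonoid.ofList w)

/-- The word z_{k₁}⋯z_{k_r} ∈ ℌ, where z_k = x^{k-1}y. -/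
def zWord (l : List ℕ+) : List XY :=
  (l.map fun k => List.replicate ((k : ℕ) - 1) XY.x ++ [XY.y]).flatten

/-- The index list (k₁,…,k_r) is admissible: either empty or k₁ ≥ 2. -/
def Admissible (l : List ℕ+) : Prop := ∀ h : l ≠ [], 2 ≤ (l.head h : ℕ)

/-- The multiple zeta value ζ(k₁,…,k_r) = Σ_{m₁>⋯>m_r>0} 1/(m₁^{k₁}⋯m_r^{k_r}). -/
def mzv (l : List ℕ+) : ℝ :=
  ∑' m : {m : Fin l.length → ℕ //
      (∀ i j : Fin l.length, i < j → m j < m i) ∧ ∀ i, 0 < m i},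
    ∏ i : Fin l.length, ((m.1 i : ℝ) ^ (l.get i : ℕ))⁻¹

/-- ℌ⁰ = ℚ + xℌy, the span of 𝟏 and the words z_{k₁}⋯z_{k_r} with k₁ ≥ 2. -/
def H0 : Submodule ℚ (MonoidAlgebra ℚ (FreeMonoid XY)) :=
  Submodule.span ℚ {t | ∃ l : List ℕ+, Admissible l ∧ t = ofW (zWord l)}

/-! ### Polylogarithms as formal power series -/

open PowerSeries in
/-- The operator `f ↦ ∑ₙ (fₙ / n) Xⁿ` attached to the letter `x`, that is, integration against
`dt/t`. The constant term of the result is `f₀ / 0 = 0`, whatever `f₀` is. -/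
def intX : PowerSeries ℝ →ₗ[ℚ] PowerSeries ℝ where
  toFun f := PowerSeries.mk fun n => coeff n f / n
  map_add' f g := by ext n; simp [add_div]
  map_smul' c f := by ext n; simp [Rat.smul_def, mul_div_assoc]

open PowerSeries in
/-- The operator `f ↦ ∑ₙ ((f₀ + ⋯ + fₙ₋₁) / n) Xⁿ` attached to the letter `y`, that is,
integration against `dt/(1-t)`. -/
def intY : PowerSeries ℝ →ₗ[ℚ] PowerSeries ℝ where
  toFun f := PowerSeries.mk fun n => (∑ m ∈ Finset.range n, coeff m f) / n
  map_add' f g := by ext n; simp [add_div, Finset.sum_add_distrib]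
  map_smul' c f := by ext n; simp [Rat.smul_def, mul_div_assoc, ← Finset.mul_sum]

/-- The integration operator attached to a letter. -/
def intL : XY → Module.End ℚ (PowerSeries ℝ)
  | XY.x => intX
  | XY.y => intY

/-- The `ℚ`-linear map sending a word to its multiple polylogarithm `∑ₙ aₙ Xⁿ`: the words act on
power series through the integration operators, and the polylogarithm is the result of this action
on the constant series `1`. Only words that do not end in `x` give the usual polylogarithm. -/
def polylog : MonoidAlgebra ℚ (FreeMonoid XY) →ₗ[ℚ] PowerSeries ℝ :=
  LinearMap.applyₗ (1 : PowerSeries ℝ) ∘ₗ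
    (MonoidAlgebra.lift ℚ (Module.End ℚ (PowerSeries ℝ)) (FreeMonoid XY)
      (FreeMonoid.lift intL)).toLinearMap

lemma ofW_nil : ofW [] = 1 := map_one _

lemma ofW_cons (a : XY) (w : List XY) : ofW (a :: w) = ofW [a] * ofW w := by
  simp only [ofW, ← map_mul]
  rfl

lemma polylog_one : polylog 1 = 1 := by simp [polylog]

lemma polylog_mul (a : XY) (h : MonoidAlgebra ℚ (FreeMonoid XY)) :
    polylog (ofW [a] * h) = intL a (polylog h) := by
  have : MonoidAlgebra.lift ℚ (Module.End ℚ (PowerSeries ℝ)) (FreeMonoid XY)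
      (FreeMonoid.lift intL) (ofW [a]) = intL a := by
    simp [ofW]
  simp [polylog, this]

lemma polylog_cons (a : XY) (w : List XY) :
    polylog (ofW (a :: w)) = intL a (polylog (ofW w)) := by
  rw [ofW_cons, polylog_mul]

/-! ### The shuffle relation for polylogarithms -/

/-- The Euler derivation `X · d/dX`. -/
def euler (f : PowerSeries ℝ) : PowerSeries ℝ :=
  PowerSeries.X * PowerSeries.derivative ℝ f

lemma coeff_euler (f : PowerSeries ℝ) (n : ℕ) :
    PowerSeries.coeff n (euler f) = n * PowerSeries.coeff n f := by
  cases n with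
  | zero => simp [euler]
  | succ n =>
    rw [euler, PowerSeries.coeff_succ_X_mul, PowerSeries.coeff_derivative]
    push_cast
    ring

lemma euler_mul (f g : PowerSeries ℝ) : euler (f * g) = euler f * g + f * euler g := by
  simp only [euler, Derivation.leibniz, smul_eq_mul]
  ring

lemma euler_add (f g : PowerSeries ℝ) : euler (f + g) = euler f + euler g := by
  simp only [euler, map_add, mul_add]

/-- The series `ω` with `X · d/dX (intL a f) = ω f`: it is `1` for `x` and `X/(1-X)` for `y`. -/
def omegaL : XY → PowerSeries ℝ
  | XY.x => 1
  | XY.y => PowerSeries.X * PowerSeries.mk 1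

lemma coeff_zero_intL (a : XY) (f : PowerSeries ℝ) : PowerSeries.coeff 0 (intL a f) = 0 := by
  cases a <;> simp [intL, intX, intY]

lemma euler_intL (a : XY) (f : PowerSeries ℝ) (h : a = XY.x → PowerSeries.coeff 0 f = 0) :
    euler (intL a f) = omegaL a * f := by
  ext n
  rw [coeff_euler]
  cases n with
  | zero =>
    cases a with
    | x => simpa [omegaL] using (h rfl).symm
    | y => simp [omegaL, mul_assoc]
  | succ n =>
    have hn : ((n + 1 : ℕ) : ℝ) ≠ 0 := by positivity
    cases a with
    | x =>
      simp only [intL, intX, omegaL, LinearMap.coe_mk, AddHom.coe_mk, PowerSeries.coeff_mk, one_mul]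
      field_simp
    | y =>
      simp only [intL, intY, omegaL, LinearMap.coe_mk, AddHom.coe_mk, PowerSeries.coeff_mk,
        mul_assoc, PowerSeries.coeff_succ_X_mul]
      rw [mul_comm (PowerSeries.mk 1) f, PowerSeries.coeff_mul,
        Finset.Nat.sum_antidiagonal_eq_sum_range_succ_mk]
      simp only [PowerSeries.coeff_mk, Pi.one_apply, mul_one]
      field_simp

/-- Integration by parts: both sides have constant term `0` and the same Euler derivative. -/
lemma intL_mul_intL (a b : XY) (f g : PowerSeries ℝ)
    (hf : a = XY.x → PowerSeries.coeff 0 f = 0) (hg : b = XY.x → PowerSeries.coeff 0 g = 0) :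
    intL a f * intL b g = intL a (f * intL b g) + intL b (intL a f * g) := by
  have h0 : ∀ a f, PowerSeries.constantCoeff (intL a f) = 0 := fun a f => by
    simpa using coeff_zero_intL a f
  have key : euler (intL a f * intL b g) =
      euler (intL a (f * intL b g) + intL b (intL a f * g)) := by
    rw [euler_mul, euler_add, euler_intL a f hf, euler_intL b g hg,
      euler_intL a _ (fun _ => by simp [h0]), euler_intL b _ (fun _ => by simp [h0])]
    ring
  ext n
  have := congrArg (PowerSeries.coeff n) key
  rw [coeff_euler, coeff_euler] at this
  rcases Nat.eq_zero_or_pos n with rfl | hn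
  · simp [h0]
  · exact mul_left_cancel₀ (by positivity) this

/-- A word which is empty or ends in `y`. -/
def Good : List XY → Prop
  | [] => True
  | XY.x :: w => w ≠ [] ∧ Good w
  | XY.y :: w => Good w

lemma Good.tail {a : XY} {w : List XY} (h : Good (a :: w)) : Good w := by
  cases a
  · exact h.2
  · exact h

lemma Good.cons {a : XY} {w : List XY} (h : Good w) (h' : w ≠ []) : Good (a :: w) := by
  cases a
  · exact ⟨h', h⟩
  · exact h

lemma coeff_zero_polylog {w : List XY} (hw : w ≠ []) :
    PowerSeries.coeff 0 (polylog (ofW w)) = 0 := by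
  cases w with
  | nil => exact absurd rfl hw
  | cons a w => rw [polylog_cons, coeff_zero_intL]

/-- The span of the nonempty words ending in `y`, that is `ℌy`. -/
def Hy : Submodule ℚ (MonoidAlgebra ℚ (FreeMonoid XY)) :=
  Submodule.span ℚ {t | ∃ w : List XY, w ≠ [] ∧ Good w ∧ t = ofW w}

lemma ofW_mem_Hy {w : List XY} (h : w ≠ []) (hw : Good w) : ofW w ∈ Hy :=
  Submodule.subset_span ⟨w, h, hw, rfl⟩

lemma ofW_mul_mem_Hy (a : XY) {t : MonoidAlgebra ℚ (FreeMonoid XY)} (ht : t ∈ Hy) :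
    ofW [a] * t ∈ Hy := by
  have : Hy ≤ Hy.comap (LinearMap.mulLeft ℚ (ofW [a])) := by
    refine Submodule.span_le.2 ?_
    rintro _ ⟨w, h, hw, rfl⟩
    change ofW [a] * ofW w ∈ Hy
    rw [← ofW_cons]
    exact ofW_mem_Hy (by simp) (hw.cons h)
  exact this ht

lemma polylog_sh
    (sh : MonoidAlgebra ℚ (FreeMonoid XY) →ₗ[ℚ]
        MonoidAlgebra ℚ (FreeMonoid XY) →ₗ[ℚ] MonoidAlgebra ℚ (FreeMonoid XY))
    (hsh_one : ∀ t, sh 1 t = t) (hsh_one' : ∀ t, sh t 1 = t)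
    (hsh : ∀ (α β : XY) (w v : List XY),
      sh (ofW (α :: w)) (ofW (β :: v)) =
        ofW [α] * sh (ofW w) (ofW (β :: v))
        + ofW [β] * sh (ofW (α :: w)) (ofW v)) :
    ∀ v w : List XY, Good v → Good w →
    polylog (ofW v) * polylog (ofW w) = polylog (sh (ofW v) (ofW w))
  | [], w => fun _ _ => by rw [ofW_nil, hsh_one, polylog_one, one_mul]
  | a :: v, [] => fun _ _ => by rw [ofW_nil, hsh_one', polylog_one, mul_one]
  | a :: v, b :: w => fun hv hw => by
    rw [hsh, map_add, polylog_mul, polylog_mul, ← polylog_sh sh hsh_one hsh_one' hsh v (b :: w) hv.tail hw,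
      ← polylog_sh sh hsh_one hsh_one' hsh (a :: v) w hv hw.tail, polylog_cons, polylog_cons]
    refine intL_mul_intL a b _ _ ?_ ?_
    · rintro rfl
      exact coeff_zero_polylog hv.1
    · rintro rfl
      exact coeff_zero_polylog hw.1
  termination_by v w => v.length + w.length

lemma sh_mem_Hy
    (sh : MonoidAlgebra ℚ (FreeMonoid XY) →ₗ[ℚ]
        MonoidAlgebra ℚ (FreeMonoid XY) →ₗ[ℚ] MonoidAlgebra ℚ (FreeMonoid XY))
    (hsh_one : ∀ t, sh 1 t = t) (hsh_one' : ∀ t, sh t 1 = t)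
    (hsh : ∀ (α β : XY) (w v : List XY),
      sh (ofW (α :: w)) (ofW (β :: v)) =
        ofW [α] * sh (ofW w) (ofW (β :: v))
        + ofW [β] * sh (ofW (α :: w)) (ofW v)) :
    ∀ v w : List XY, Good v → Good w → (v ≠ [] ∨ w ≠ []) →
    sh (ofW v) (ofW w) ∈ Hy
  | [], w => fun _ hw h => by
    rw [ofW_nil, hsh_one]
    exact ofW_mem_Hy (by simpa using h) hw
  | a :: v, [] => fun hv _ _ => by
    rw [ofW_nil, hsh_one']
    exact ofW_mem_Hy (by simp) hv
  | a :: v, b :: w => fun hv hw _ => by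
    rw [hsh]
    exact add_mem
      (ofW_mul_mem_Hy a (sh_mem_Hy sh hsh_one hsh_one' hsh v (b :: w) hv.tail hw (by simp)))
      (ofW_mul_mem_Hy b (sh_mem_Hy sh hsh_one hsh_one' hsh (a :: v) w hv hw.tail (by simp)))
  termination_by v w => v.length + w.length


/-! ### Admissible words -/

lemma zWord_cons (k : ℕ+) (l : List ℕ+) :
    zWord (k :: l) = List.replicate ((k : ℕ) - 1) XY.x ++ XY.y :: zWord l := by
  simp [zWord]

lemma good_zWord : ∀ l : List ℕ+, Good (zWord l)
  | [] => trivial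
  | k :: l => by
    rw [zWord_cons]
    induction (k : ℕ) - 1 with
    | zero => exact good_zWord l
    | succ n ih => exact ih.cons (by simp)

lemma Good.exists_zWord : ∀ {w : List XY}, Good w → ∃ l, w = zWord l
  | [], _ => ⟨[], rfl⟩
  | XY.y :: w, h => by
    obtain ⟨l, rfl⟩ := Good.exists_zWord (w := w) h
    exact ⟨1 :: l, by simp [zWord_cons]⟩
  | XY.x :: w, h => by
    obtain ⟨l, rfl⟩ := Good.exists_zWord (w := w) h.2
    cases l with
    | nil => exact absurd rfl h.1
    | cons k l =>
      refine ⟨(k + 1) :: l, ?_⟩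
      rw [zWord_cons, zWord_cons, ← List.cons_append, ← List.replicate_succ]
      have := k.pos
      congr 2
      simp
      omega

lemma x_mul_mem_H0 {t : MonoidAlgebra ℚ (FreeMonoid XY)} (ht : t ∈ Hy) :
    ofW [XY.x] * t ∈ H0 := by
  have : Hy ≤ H0.comap (LinearMap.mulLeft ℚ (ofW [XY.x])) := by
    refine Submodule.span_le.2 ?_
    rintro _ ⟨w, h, hw, rfl⟩
    change ofW [XY.x] * ofW w ∈ H0
    rw [← ofW_cons]
    obtain ⟨l, hl⟩ := (hw.cons h : Good (XY.x :: w)).exists_zWord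
    refine Submodule.subset_span ⟨l, ?_, by rw [hl]⟩
    intro hne
    cases l with
    | nil => exact absurd rfl hne
    | cons k l =>
      by_contra hk
      have h1 : (k : ℕ) - 1 = 0 := by simp at hk ⊢; omega
      rw [zWord_cons, h1] at hl
      simp at hl
  exact this ht

/-- A nonempty admissible index list gives a word of the form `x u` with `u` in `ℌy`. -/
lemma Admissible.exists_x {l : List ℕ+} (h : Admissible l) :
    zWord l = [] ∨ ∃ u, u ≠ [] ∧ zWord l = XY.x :: u := by
  cases l with
  | nil => exact Or.inl rfl
  | cons k l =>
    right
    have hk : 2 ≤ (k : ℕ) := h (by simp)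
    obtain ⟨j, hj⟩ : ∃ j, (k : ℕ) - 1 = j + 1 := ⟨(k : ℕ) - 2, by omega⟩
    exact ⟨List.replicate j XY.x ++ XY.y :: zWord l, by simp,
      by rw [zWord_cons, hj, List.replicate_succ, List.cons_append]⟩

/-! ### Convergence -/

lemma coeff_polylog_nonneg (w : List XY) (n : ℕ) :
    0 ≤ PowerSeries.coeff n (polylog (ofW w)) := by
  induction w generalizing n with
  | nil =>
    rw [ofW_nil, polylog_one, PowerSeries.coeff_one]
    split_ifs <;> simp
  | cons a w ih =>
    rw [polylog_cons]
    cases a with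
    | x => simpa [intL, intX] using div_nonneg (ih n) n.cast_nonneg
    | y => simpa [intL, intY] using
        div_nonneg (Finset.sum_nonneg fun m _ => ih m) n.cast_nonneg

lemma sum_inv_sqrt_le (n : ℕ) :
    ∑ m ∈ Finset.range n, (1 / √((m : ℝ) + 1)) ≤ 2 * √(n : ℝ) := by
  induction n with
  | zero => simp
  | succ n ih =>
    rw [Finset.sum_range_succ]
    push_cast
    have h1 : 0 < √((n : ℝ) + 1) := Real.sqrt_pos.2 (by positivity)
    have h2 := Real.sq_sqrt (show (0 : ℝ) ≤ n + 1 by positivity)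
    have h3 := Real.sq_sqrt (show (0 : ℝ) ≤ n by positivity)
    have h4 : 1 / √((n : ℝ) + 1) ≤ 2 * √((n : ℝ) + 1) - 2 * √(n : ℝ) := by
      rw [div_le_iff₀ h1]
      nlinarith [sq_nonneg (√((n : ℝ) + 1) - √(n : ℝ))]
    linarith

/-- The averaging in `intY` preserves the order `n ^ (-1/2)`, so every polylogarithm has
coefficients of at most this order. -/
lemma exists_coeff_polylog_le (w : List XY) :
    ∃ C : ℝ, 0 ≤ C ∧ ∀ n : ℕ, PowerSeries.coeff n (polylog (ofW w)) ≤ C * (1 / √((n : ℝ) + 1)) := by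
  induction w with
  | nil =>
    refine ⟨1, zero_le_one, fun n => ?_⟩
    rw [ofW_nil, polylog_one, PowerSeries.coeff_one]
    split_ifs with h
    · simp [h]
    · positivity
  | cons a w ih =>
    obtain ⟨C, hC, h⟩ := ih
    rw [polylog_cons]
    cases a with
    | x =>
      refine ⟨C, hC, fun n => ?_⟩
      rcases Nat.eq_zero_or_pos n with rfl | hn
      · rw [coeff_zero_intL]
        positivity
      · refine le_trans ?_ (h n)
        have : (1 : ℝ) ≤ n := by exact_mod_cast hn
        simpa [intL, intX] using div_le_self (coeff_polylog_nonneg w n) this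
    | y =>
      refine ⟨4 * C, by positivity, fun n => ?_⟩
      rcases Nat.eq_zero_or_pos n with rfl | hn
      · rw [coeff_zero_intL]
        positivity
      · have hn1 : (1 : ℝ) ≤ n := by exact_mod_cast hn
        have hsum : ∑ m ∈ Finset.range n, PowerSeries.coeff m (polylog (ofW w))
            ≤ C * (2 * √(n : ℝ)) :=
          calc _ ≤ ∑ m ∈ Finset.range n, C * (1 / √((m : ℝ) + 1)) :=
                Finset.sum_le_sum fun m _ => h m
            _ ≤ _ := by
                rw [← Finset.mul_sum]
                exact mul_le_mul_of_nonneg_left (sum_inv_sqrt_le n) hC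
        have hs : √((n : ℝ) + 1) ≤ 2 * √(n : ℝ) := by
          rw [show (2 : ℝ) * √(n : ℝ) = √(4 * n) by
            rw [Real.sqrt_mul (by norm_num), show (4 : ℝ) = 2 ^ 2 by norm_num,
              Real.sqrt_sq (by norm_num)]]
          exact Real.sqrt_le_sqrt (by linarith)
        have h1 : 0 < √((n : ℝ) + 1) := Real.sqrt_pos.2 (by positivity)
        have h3 := Real.sq_sqrt (show (0 : ℝ) ≤ n by positivity)
        have : (C * (2 * √(n : ℝ))) / n ≤ 4 * C * (1 / √((n : ℝ) + 1)) := by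
          rw [mul_one_div, div_le_div_iff₀ (by positivity) h1]
          calc C * (2 * √(n : ℝ)) * √((n : ℝ) + 1)
              ≤ C * (2 * √(n : ℝ)) * (2 * √(n : ℝ)) := by gcongr
            _ = 4 * C * (√(n : ℝ)) ^ 2 := by ring
            _ = 4 * C * n := by rw [h3]
        refine le_trans ?_ this
        simp only [intL, intY, LinearMap.coe_mk, AddHom.coe_mk, PowerSeries.coeff_mk]
        gcongr

lemma summable_polylog_x (u : List XY) :
    Summable fun n => PowerSeries.coeff n (polylog (ofW (XY.x :: u))) := by
  obtain ⟨C, hC, h⟩ := exists_coeff_polylog_le u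
  have hs : Summable fun n : ℕ => C * (1 / (n : ℝ) ^ (3 / 2 : ℝ)) :=
    (Real.summable_one_div_nat_rpow.2 (by norm_num)).mul_left C
  refine Summable.of_nonneg_of_le (fun n => coeff_polylog_nonneg _ n) (fun n => ?_) hs
  rcases Nat.eq_zero_or_pos n with rfl | hn
  · rw [polylog_cons, coeff_zero_intL]
    positivity
  · have hn1 : (0 : ℝ) < n := by exact_mod_cast hn
    have hpow : (n : ℝ) ^ (3 / 2 : ℝ) = √(n : ℝ) * n := by
      rw [Real.sqrt_eq_rpow, show (3 / 2 : ℝ) = 1 / 2 + 1 by norm_num, Real.rpow_add hn1,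
        Real.rpow_one]
    have hsq : 0 < √(n : ℝ) := Real.sqrt_pos.2 hn1
    have h1 : PowerSeries.coeff n (polylog (ofW (XY.x :: u))) =
        PowerSeries.coeff n (polylog (ofW u)) / n := by
      rw [polylog_cons]
      simp [intL, intX]
    rw [h1, hpow, ← div_div, ← mul_div_assoc]
    gcongr
    refine (h n).trans ?_
    gcongr
    linarith

lemma Admissible.summable {l : List ℕ+} (h : Admissible l) :
    Summable fun n => PowerSeries.coeff n (polylog (ofW (zWord l))) := by
  rcases h.exists_x with h | ⟨u, -, h⟩
  · rw [h, ofW_nil, polylog_one]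
    refine summable_of_ne_finset_zero (s := {0}) fun n hn => ?_
    rw [PowerSeries.coeff_one, if_neg (by simpa using hn)]
  · rw [h]
    exact summable_polylog_x u

/-! ### Multiple zeta values as sums of polylogarithm coefficients -/

lemma coeff_polylog_replicate (j n : ℕ) (w : List XY) :
    PowerSeries.coeff n (polylog (ofW (List.replicate j XY.x ++ w))) =
      ((n : ℝ) ^ j)⁻¹ * PowerSeries.coeff n (polylog (ofW w)) := by
  induction j with
  | zero => simp
  | succ j ih =>
    rw [List.replicate_succ, List.cons_append, polylog_cons]
    simp only [intL, intX, LinearMap.coe_mk, AddHom.coe_mk, PowerSeries.coeff_mk]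
    rw [ih, pow_succ, mul_inv]
    ring

lemma coeff_polylog_zWord_cons (k : ℕ+) (l : List ℕ+) (n : ℕ) :
    PowerSeries.coeff n (polylog (ofW (zWord (k :: l)))) =
      ((n : ℝ) ^ (k : ℕ))⁻¹ *
        ∑ m ∈ Finset.range n, PowerSeries.coeff m (polylog (ofW (zWord l))) := by
  rw [zWord_cons, coeff_polylog_replicate, polylog_cons]
  simp only [intL, intY, LinearMap.coe_mk, AddHom.coe_mk, PowerSeries.coeff_mk]
  obtain ⟨j, hj⟩ : ∃ j, (k : ℕ) = j + 1 := ⟨(k : ℕ) - 1, by have := k.pos; omega⟩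
  rw [hj, Nat.add_sub_cancel, pow_succ, mul_inv]
  ring

/-- The condition on summation indices in a multiple zeta value. -/
def Dec {r : ℕ} (m : Fin r → ℕ) : Prop := (∀ i j : Fin r, i < j → m j < m i) ∧ ∀ i, 0 < m i

lemma dec_cons {r : ℕ} (n : ℕ) (m : Fin r → ℕ) :
    Dec (Fin.cons n m : Fin (r + 1) → ℕ) ↔ 0 < n ∧ Dec m ∧ ∀ i, m i < n := by
  simp only [Dec, Fin.forall_fin_succ, Fin.cons_zero, Fin.cons_succ, Fin.succ_pos,
    Fin.succ_lt_succ_iff, Fin.not_lt_zero, false_imp_iff, true_imp_iff, true_and]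
  tauto

/-- The summand of a multiple zeta value. -/
def zetaTerm (l : List ℕ+) (m : Fin l.length → ℕ) : ℝ :=
  ∏ i : Fin l.length, ((m i : ℝ) ^ (l.get i : ℕ))⁻¹

lemma zetaTerm_nonneg (l : List ℕ+) (m : Fin l.length → ℕ) : 0 ≤ zetaTerm l m :=
  Finset.prod_nonneg fun i _ => by positivity

lemma zetaTerm_cons (k : ℕ+) (l : List ℕ+) (n : ℕ) (m : Fin l.length → ℕ) :
    zetaTerm (k :: l) (Fin.cons n m : Fin (l.length + 1) → ℕ) =
      ((n : ℝ) ^ (k : ℕ))⁻¹ * zetaTerm l m :=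
  Fin.prod_univ_succ _

open Classical in
/-- The part `∑_{N > m₁ > ⋯ > m_r > 0}` of the series of a multiple zeta value, in `[0, ∞]`. -/
def trunc (l : List ℕ+) (N : ℕ) : ENNReal :=
  ∑' m : Fin l.length → ℕ, if Dec m ∧ ∀ i, m i < N then ENNReal.ofReal (zetaTerm l m) else 0

open Classical in
/-- Splitting off the largest summation index, subject to a condition `p` on it. -/
lemma tsum_cons (k : ℕ+) (l : List ℕ+) (p : ℕ → Prop) [DecidablePred p] :
    (∑' m : Fin (k :: l).length → ℕ,
      if Dec m ∧ p (m (0 : Fin (l.length + 1))) then ENNReal.ofReal (zetaTerm (k :: l) m) else 0) =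
    ∑' n : ℕ, if p n then ENNReal.ofReal ((n : ℝ) ^ (k : ℕ))⁻¹ * trunc l n else 0 := by
  refine ((Fin.consEquiv (fun _ : Fin (l.length + 1) => ℕ)).tsum_eq _).symm.trans ?_
  rw [ENNReal.summable.tsum_prod' fun _ => ENNReal.summable]
  refine tsum_congr fun n => ?_
  rw [trunc, ← ENNReal.tsum_mul_left]
  by_cases hp : p n
  · rw [if_pos hp]
    refine tsum_congr fun m => ?_
    change (if Dec (Fin.cons n m : Fin (l.length + 1) → ℕ) ∧ p n then
      ENNReal.ofReal (zetaTerm (k :: l) (Fin.cons n m : Fin (l.length + 1) → ℕ)) else 0) = _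
    rw [dec_cons, zetaTerm_cons, ENNReal.ofReal_mul (by positivity)]
    rcases Nat.eq_zero_or_pos n with rfl | hn
    · simp
    · simp [hn, hp]
  · rw [if_neg hp]
    refine ENNReal.tsum_eq_zero.2 fun m => ?_
    exact if_neg fun h => hp h.2

lemma tsum_nil (f : (Fin ([] : List ℕ+).length → ℕ) → ENNReal) :
    ∑' m, f m = f (fun i : Fin 0 => i.elim0) :=
  tsum_eq_single _ fun m hm => absurd (Subsingleton.elim (α := Fin 0 → ℕ) m _) hm

lemma trunc_eq (l : List ℕ+) (N : ℕ) (hN : 0 < N) :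
    trunc l N = ENNReal.ofReal
      (∑ m ∈ Finset.range N, PowerSeries.coeff m (polylog (ofW (zWord l)))) := by
  classical
  induction l generalizing N with
  | nil =>
    have h1 : trunc [] N = 1 := by
      rw [trunc, tsum_nil,
        if_pos ⟨⟨fun i : Fin 0 => i.elim0, fun i : Fin 0 => i.elim0⟩, fun i : Fin 0 => i.elim0⟩]
      simp [zetaTerm]
    have h2 : zWord [] = [] := rfl
    rw [h1, h2, ofW_nil, polylog_one]
    simp [PowerSeries.coeff_one, hN]
  | cons k l ih =>
    have h1 : trunc (k :: l) N = ∑' m : Fin (k :: l).length → ℕ,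
        if Dec m ∧ (m (0 : Fin (l.length + 1)) < N) then
          ENNReal.ofReal (zetaTerm (k :: l) m) else 0 := by
      refine tsum_congr fun m => ?_
      have : (Dec m ∧ ∀ i, m i < N) ↔ (Dec m ∧ (m (0 : Fin (l.length + 1)) < N)) := by
        refine and_congr_right fun hd => ⟨fun h => h _, fun h i => ?_⟩
        rcases Fin.eq_zero_or_eq_succ (n := l.length) i with rfl | ⟨j, rfl⟩
        · exact h
        · exact (hd.1 (0 : Fin (l.length + 1)) j.succ (Fin.succ_pos j)).trans h
      simp only [this]
    refine (h1.trans (tsum_cons k l (fun n => n < N))).trans ?_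
    rw [tsum_eq_sum (s := Finset.range N) (fun n hn => if_neg (by simpa using hn)),
      ENNReal.ofReal_sum_of_nonneg (fun n _ => coeff_polylog_nonneg _ n)]
    refine Finset.sum_congr rfl fun n hn => ?_
    rw [if_pos (Finset.mem_range.1 hn), coeff_polylog_zWord_cons,
      ENNReal.ofReal_mul (by positivity)]
    rcases Nat.eq_zero_or_pos n with rfl | hn
    · simp
    · rw [ih n hn]

lemma tsum_coeff_polylog (l : List ℕ+) :
    ∑' n, PowerSeries.coeff n (polylog (ofW (zWord l))) = mzv l := by
  classical
  have hm : mzv l = (∑' m : Fin l.length → ℕ,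
      if Dec m then ENNReal.ofReal (zetaTerm l m) else 0).toReal := by
    rw [ENNReal.tsum_toReal_eq (fun m => by split_ifs <;> simp)]
    change ∑' m : {m : Fin l.length → ℕ // Dec m}, zetaTerm l m.1 = _
    refine (tsum_subtype {m : Fin l.length → ℕ | Dec m} (zetaTerm l)).trans ?_
    refine tsum_congr fun m => ?_
    by_cases h : Dec m
    · simp [h, ENNReal.toReal_ofReal (zetaTerm_nonneg l m)]
    · simp [h]
  have ha : ∑' n, PowerSeries.coeff n (polylog (ofW (zWord l))) =
      (∑' n, ENNReal.ofReal (PowerSeries.coeff n (polylog (ofW (zWord l))))).toReal := by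
    rw [ENNReal.tsum_toReal_eq (fun m => by simp)]
    exact tsum_congr fun n => (ENNReal.toReal_ofReal (coeff_polylog_nonneg _ n)).symm
  rw [hm, ha]
  congr 1
  cases l with
  | nil =>
    have h2 : zWord [] = [] := rfl
    rw [h2, ofW_nil, polylog_one, tsum_eq_single 0 (fun n hn => by
      simp [PowerSeries.coeff_one, hn]), tsum_nil,
      if_pos ⟨fun i : Fin 0 => i.elim0, fun i : Fin 0 => i.elim0⟩]
    simp [zetaTerm]
  | cons k l =>
    have := tsum_cons k l (fun _ => True)
    simp only [and_true, if_true] at this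
    rw [this]
    refine tsum_congr fun n => ?_
    rw [coeff_polylog_zWord_cons, ENNReal.ofReal_mul (by positivity)]
    rcases Nat.eq_zero_or_pos n with rfl | hn
    · simp
    · rw [trunc_eq l n hn]

theorem zeta_shuffle_hom
    -- the shuffle product ⧢ : a ℚ-bilinear product on ℌ ...
    (sh : MonoidAlgebra ℚ (FreeMonoid XY) →ₗ[ℚ]
        MonoidAlgebra ℚ (FreeMonoid XY) →ₗ[ℚ] MonoidAlgebra ℚ (FreeMonoid XY))
    -- ... satisfying 𝟏 ⧢ t = t ⧢ 𝟏 = t ...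
    (hsh_one : ∀ t, sh 1 t = t) (hsh_one' : ∀ t, sh t 1 = t)
    -- ... and αw ⧢ βv = α(w ⧢ βv) + β(αw ⧢ v) for letters α, β
    (hsh : ∀ (α β : XY) (w v : List XY),
      sh (ofW (α :: w)) (ofW (β :: v)) =
        ofW [α] * sh (ofW w) (ofW (β :: v))
        + ofW [β] * sh (ofW (α :: w)) (ofW v))
    -- ζ : ℌ⁰ → ℝ, the ℚ-linear map with ζ(z_{k₁}⋯z_{k_r}) = ζ(k₁,…,k_r)
    (zeta : MonoidAlgebra ℚ (FreeMonoid XY) →ₗ[ℚ] ℝ)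
    (hzeta : ∀ l : List ℕ+, Admissible l → zeta (ofW (zWord l)) = mzv l) :
    -- conclusion: ζ(v)ζ(w) = ζ(v ⧢ w) for all v, w ∈ ℌ⁰
    ∀ v ∈ H0, ∀ w ∈ H0, zeta v * zeta w = zeta (sh v w) := by
  have hQ : ∀ t ∈ H0, HasSum (fun n => PowerSeries.coeff n (polylog t)) (zeta t) := by
    intro t ht
    induction ht using Submodule.span_induction with
    | mem t ht =>
      obtain ⟨l, hl, rfl⟩ := ht
      rw [hzeta l hl, ← tsum_coeff_polylog]
      exact hl.summable.hasSum
    | zero => simp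
    | add s t _ _ hs ht => simpa using hs.add ht
    | smul c t _ ht =>
      simpa [Rat.smul_def] using ht.mul_left (c : ℝ)
  intro v hv w hw
  induction hv, hw using Submodule.span_induction₂ with
  | mem_mem v w hv hw =>
    obtain ⟨k, hk, rfl⟩ := hv
    obtain ⟨l, hl, rfl⟩ := hw
    have hmem : sh (ofW (zWord k)) (ofW (zWord l)) ∈ H0 := by
      rcases hk.exists_x with h | ⟨u, hu, h⟩
      · rw [h, ofW_nil, hsh_one]
        exact Submodule.subset_span ⟨l, hl, rfl⟩
      rcases hl.exists_x with h' | ⟨u', hu', h'⟩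
      · rw [h', ofW_nil, hsh_one']
        exact Submodule.subset_span ⟨k, hk, rfl⟩
      have gk := h ▸ good_zWord k
      have gl := h' ▸ good_zWord l
      rw [h, h', hsh]
      exact add_mem
        (x_mul_mem_H0 (sh_mem_Hy sh hsh_one hsh_one' hsh _ _ gk.tail gl (Or.inl hu)))
        (x_mul_mem_H0 (sh_mem_Hy sh hsh_one hsh_one' hsh _ _ gk gl.tail (Or.inr hu')))
    have hprod := (hQ _ hmem).tsum_eq
    rw [← polylog_sh sh hsh_one hsh_one' hsh _ _ (good_zWord k) (good_zWord l)] at hprod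
    simp only [PowerSeries.coeff_mul] at hprod
    rw [← hprod, hzeta k hk, hzeta l hl, ← tsum_coeff_polylog, ← tsum_coeff_polylog]
    exact tsum_mul_tsum_eq_tsum_sum_antidiagonal_of_summable_norm hk.summable.norm hl.summable.norm
  | zero_left => simp
  | zero_right => simp
  | add_left u v w _ _ _ hu hv => simp [add_mul, hu, hv]
  | add_right u v w _ _ _ hu hv => simp [mul_add, hu, hv]
  | smul_left c v w _ _ h => simp [← h]
  | smul_right c v w _ _ h => simp [← h]
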